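/- Let d ≥ 1 be an integer. There exist constants C = C(d) > 0 and c = c(d) > 0 such that for every 1 ≤ p ≤ ∞, every j ∈ ℤ, every t > 0, and every f ∈ 𝒮(ℝ^d), the function u_j(x) := (2π)^{−d} ∫_{ℝ^d} e^{i x·ξ} (1 + t|ξ|) e^{−t|ξ|} φ̂₀(2^{−j}ξ) F[f](ξ) dξ satisfies ‖u_j‖_{L^p(ℝ^d)} ≤ C e^{−c 2^j t} ‖Δ_j f‖_{L^p(ℝ^d)}. (Dissipative estimate on Littlewood–Paley blocks for the multipliers (1 + t|ξ|) e^{−t|ξ|}, covering the kernels K^{(3)}, K^{(4)}, K^{(5)} of the linear Stokes solution formula.) -/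

import Mathlib

/-!
The multiplier `(1 + t|ξ|) e^{-t|ξ|}` is a convolution operator with an exponentially small `L¹`
kernel once it is localized to frequencies `|ξ| ~ 2^j`, so the estimate is Young's inequality.

Put `s = 2^j t`. Since `φ̂₀` lives on `1/2 ≤ |ξ| ≤ 2`, the multiplier may be replaced by
`m_s(2^{-j}ξ)`, where `m_s(ξ) = χ(ξ) (1 + s|ξ|) e^{-s|ξ|}` and `χ` is a smooth cutoff equal to `1`
on that annulus and supported away from the origin. Faà di Bruno's formula bounds the `n`-th
derivative of `m_s` by a multiple of `(1 + s)^n e^{-s/8}`, hence every Schwartz seminorm of `m_s` is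
`O(e^{-s/16})` (`symbol_bound`). As `m ↦ ‖𝓕⁻ m‖_{L¹}` is a continuous seminorm on the Schwartz
space, `‖𝓕⁻ m_s‖_{L¹} = O(e^{-s/16})` (`exists_symbol`). The kernel of `m_s(2^{-j}ξ)` is an
`L¹`-normalized dilate of `𝓕⁻ m_s` (`lintegral_multKernel`), its convolution with `Δ_j f` is `u_j`
(`conv_multKernel`, `FT_LP`), and Young's inequality (`eLpNorm_conv_le`) concludes with `c = 1/16`,
uniformly in `p`.
-/

open MeasureTheory Filter Complex
open scoped ENNReal NNReal RealInnerProductSpace Topology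

noncomputable section

abbrev Rd (d : ℕ) := EuclideanSpace ℝ (Fin d)

/-- Fourier transform with the paper's convention `F[f](ξ) = ∫ e^{-i x·ξ} f(x) dx`. -/
def FT {d : ℕ} (f : Rd d → ℂ) (ξ : Rd d) : ℂ :=
  ∫ x : Rd d, Complex.exp (-Complex.I * (↑(⟪x, ξ⟫) : ℂ)) * f x

/-- A Littlewood–Paley family: a Schwartz function `φ₀` whose Fourier transform is
real, takes values in `[0,1]`, is supported in the annulus `1/2 ≤ |ξ| ≤ 2`, and whose
dyadic dilates sum to `1` away from the origin. -/
structure LPData (d : ℕ) where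
  φ : SchwartzMap (Rd d) ℂ
  him : ∀ ξ : Rd d, (FT (⇑φ) ξ).im = 0
  h0 : ∀ ξ : Rd d, 0 ≤ (FT (⇑φ) ξ).re
  h1 : ∀ ξ : Rd d, (FT (⇑φ) ξ).re ≤ 1
  hsupp : ∀ ξ : Rd d, FT (⇑φ) ξ ≠ 0 → (1/2 : ℝ) ≤ ‖ξ‖ ∧ ‖ξ‖ ≤ 2
  hsum : ∀ ξ : Rd d, ξ ≠ 0 → HasSum (fun j : ℤ => FT (⇑φ) ((2:ℝ) ^ (-j) • ξ)) 1

/-- Littlewood–Paley block `Δ_j f = φ_j * f`, where `φ_j(x) = 2^{dj} φ₀(2^j x)`. -/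
def LP {d : ℕ} (P : LPData d) (j : ℤ) (f : Rd d → ℂ) (x : Rd d) : ℂ :=
  ∫ y : Rd d, (((2:ℝ) ^ ((d : ℤ) * j) : ℝ) : ℂ) * P.φ ((2:ℝ) ^ j • y) * f (x - y)

/-- `ℓ^r(ℤ)`-norm of a family of extended nonnegative reals. -/
def ellNorm (r : ℝ≥0∞) (a : ℤ → ℝ≥0∞) : ℝ≥0∞ :=
  if r = ∞ then ⨆ j, a j else (∑' j, a j ^ r.toReal) ^ (1 / r.toReal)

/-- Homogeneous Besov norm `‖f‖_{Ḃ^s_{p,r}}`. -/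
def besov {d : ℕ} (P : LPData d) (s : ℝ) (p r : ℝ≥0∞) (f : Rd d → ℂ) : ℝ≥0∞ :=
  ellNorm r fun j => ENNReal.ofReal ((2:ℝ) ^ (s * (j:ℝ))) * eLpNorm (LP P j f) p volume

/-- Mixed norm `L^q_t(0,∞; L^p_x)`. -/
def LqLp {d : ℕ} (q p : ℝ≥0∞) (g : ℝ → Rd d → ℂ) : ℝ≥0∞ :=
  if q = ∞ then essSup (fun t => eLpNorm (g t) p volume) (volume.restrict (Set.Ioi (0:ℝ)))
  else (∫⁻ t in Set.Ioi (0:ℝ), (eLpNorm (g t) p volume) ^ q.toReal) ^ (1 / q.toReal)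

/-- Chemin–Lerner norm `‖f‖_{L̃^q(Ḃ^s_{p,r})}` on `ℝ^d × (0,∞)`. -/
def CL {d : ℕ} (P : LPData d) (s : ℝ) (q p r : ℝ≥0∞) (f : ℝ → Rd d → ℂ) : ℝ≥0∞ :=
  ellNorm r fun j => ENNReal.ofReal ((2:ℝ) ^ (s * (j:ℝ))) * LqLp q p fun t => LP P j (f t)

/-- `f : ℝ^d × (0,∞) → ℂ` (curried as `f t x`) is slice-Schwartz: continuous on
`ℝ^d × (0,∞)` and Schwartz in `x` for each fixed `t > 0`. -/
def SliceSchwartz {d : ℕ} (f : ℝ → Rd d → ℂ) : Prop :=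
  ContinuousOn (fun z : Rd d × ℝ => f z.2 z.1) (Set.univ ×ˢ Set.Ioi 0) ∧
  ∀ t : ℝ, 0 < t → ∃ g : SchwartzMap (Rd d) ℂ, f t = ⇑g

/-! ### Young's inequality `L¹ * L^p ⊆ L^p` -/

/-- Hölder's inequality for the measure `|k| dμ` bounds the inner integral, and Tonelli with
translation invariance does the rest. -/
lemma lintegral_conv_rpow_le {E : Type*} [NormedAddCommGroup E] [MeasurableSpace E] [BorelSpace E]
    [SecondCountableTopology E]
    (μ : Measure E) [SFinite μ] [μ.IsAddRightInvariant] {k g : E → ℂ}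
    (hk : Measurable k) (hg : Measurable g) {q : ℝ} (hq : 1 ≤ q) :
    ∫⁻ x, (∫⁻ y, ‖k y‖ₑ * ‖g (x - y)‖ₑ ∂μ) ^ q ∂μ
      ≤ (∫⁻ y, ‖k y‖ₑ ∂μ) ^ q * ∫⁻ x, ‖g x‖ₑ ^ q ∂μ := by
  have hq0 : 0 < q := by linarith
  set A := ∫⁻ y, ‖k y‖ₑ ∂μ with hA
  have key : ∀ x, (∫⁻ y, ‖k y‖ₑ * ‖g (x - y)‖ₑ ∂μ) ^ q
      ≤ (∫⁻ y, ‖k y‖ₑ * ‖g (x - y)‖ₑ ^ q ∂μ) * A ^ (q - 1) := by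
    intro x
    have hgx : Measurable fun y => g (x - y) := hg.comp (measurable_const.sub measurable_id)
    have h := eLpNorm'_le_eLpNorm'_mul_rpow_measure_univ (p := 1) (q := q)
      (μ := μ.withDensity fun y => ‖k y‖ₑ) (f := fun y => g (x - y)) one_pos hq
      hgx.aestronglyMeasurable
    simp only [eLpNorm', ENNReal.rpow_one, div_one] at h
    rw [lintegral_withDensity_eq_lintegral_mul _ hk.enorm hgx.enorm,
      lintegral_withDensity_eq_lintegral_mul _ hk.enorm (hgx.enorm.pow_const q),
      withDensity_apply _ MeasurableSet.univ, Measure.restrict_univ] at h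
    simp only [Pi.mul_apply] at h
    calc _ ≤ _ := ENNReal.rpow_le_rpow h hq0.le
      _ = _ := by
        rw [ENNReal.mul_rpow_of_nonneg _ _ hq0.le, ← ENNReal.rpow_mul, ← ENNReal.rpow_mul,
          one_div_mul_cancel hq0.ne', ENNReal.rpow_one]
        congr 2
        field_simp
  calc _ ≤ ∫⁻ x, (∫⁻ y, ‖k y‖ₑ * ‖g (x - y)‖ₑ ^ q ∂μ) * A ^ (q - 1) ∂μ := lintegral_mono key
    _ = (∫⁻ x, ∫⁻ y, ‖k y‖ₑ * ‖g (x - y)‖ₑ ^ q ∂μ ∂μ) * A ^ (q - 1) := by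
        rw [lintegral_mul_const]
        fun_prop
    _ = (∫⁻ y, ∫⁻ x, ‖k y‖ₑ * ‖g (x - y)‖ₑ ^ q ∂μ ∂μ) * A ^ (q - 1) := by
        rw [lintegral_lintegral_swap]
        fun_prop
    _ = (∫⁻ y, ‖k y‖ₑ * ∫⁻ x, ‖g x‖ₑ ^ q ∂μ ∂μ) * A ^ (q - 1) := by
        congr 2
        ext y
        rw [lintegral_const_mul _ (by fun_prop)]
        congr 1
        exact lintegral_sub_right_eq_self (fun x => ‖g x‖ₑ ^ q) y
    _ = A ^ q * ∫⁻ x, ‖g x‖ₑ ^ q ∂μ := by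
        rw [lintegral_mul_const _ hk.enorm, ← hA, mul_right_comm]
        congr 1
        nth_rw 1 [← ENNReal.rpow_one A]
        rw [← ENNReal.rpow_add_of_nonneg _ _ zero_le_one (by linarith)]
        congr 1
        ring

/-- Young's inequality for convolution with an `L¹` kernel. -/
lemma eLpNorm_conv_le {E : Type*} [NormedAddCommGroup E] [MeasurableSpace E] [BorelSpace E]
    [SecondCountableTopology E]
    (μ : Measure E) [SFinite μ] [μ.IsAddLeftInvariant] [μ.IsNegInvariant] {k g : E → ℂ}
    (hk : Measurable k) (hg : Measurable g) {p : ℝ≥0∞} (hp : 1 ≤ p) :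
    eLpNorm (fun x => ∫ y, k y * g (x - y) ∂μ) p μ
      ≤ (∫⁻ y, ‖k y‖ₑ ∂μ) * eLpNorm g p μ := by
  have hpt : ∀ x, ‖∫ y, k y * g (x - y) ∂μ‖ₑ ≤ ∫⁻ y, ‖k y‖ₑ * ‖g (x - y)‖ₑ ∂μ := by
    intro x
    refine (enorm_integral_le_lintegral_enorm _).trans_eq ?_
    simp only [enorm_mul]
  rcases eq_or_ne p ∞ with rfl | hp'
  · simp only [eLpNorm_exponent_top]
    refine eLpNormEssSup_le_of_ae_enorm_bound (Eventually.of_forall fun x => ?_)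
    refine (hpt x).trans ?_
    rw [← lintegral_mul_const _ hk.enorm]
    refine lintegral_mono_ae ?_
    have h1 : ∀ᵐ y ∂μ, ‖g y‖ₑ ≤ eLpNormEssSup g μ := ae_le_eLpNormEssSup
    filter_upwards [(Measure.measurePreserving_sub_left μ x).quasiMeasurePreserving.ae h1] with y hy
    gcongr
  · have hp0 : p ≠ 0 := (zero_lt_one.trans_le hp).ne'
    have hq : 1 ≤ p.toReal := by
      rw [← ENNReal.toReal_one]; exact ENNReal.toReal_mono hp' hp
    have hq0 : 0 < p.toReal := by linarith
    rw [eLpNorm_eq_lintegral_rpow_enorm_toReal hp0 hp',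
      eLpNorm_eq_lintegral_rpow_enorm_toReal hp0 hp']
    calc _ ≤ ((∫⁻ y, ‖k y‖ₑ ∂μ) ^ p.toReal * ∫⁻ x, ‖g x‖ₑ ^ p.toReal ∂μ) ^ (1 / p.toReal) := by
          refine ENNReal.rpow_le_rpow (le_trans (lintegral_mono fun x => ?_)
            (lintegral_conv_rpow_le μ hk hg hq)) (by positivity)
          exact ENNReal.rpow_le_rpow (hpt x) hq0.le
      _ = _ := by
          rw [ENNReal.mul_rpow_of_nonneg _ _ (by positivity), ← ENNReal.rpow_mul,
            mul_one_div_cancel hq0.ne', ENNReal.rpow_one]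

/-! ### Schwartz seminorms of the localized symbol -/

/-- The profile of the multiplier: `(1 + t|ξ|) e^{-t|ξ|} = profile (t|ξ|)`. -/
def profile (r : ℝ) : ℝ := (1 + r) * Real.exp (-r)

lemma contDiff_profile : ContDiff ℝ (⊤ : ℕ∞) profile := by
  unfold profile; fun_prop

lemma iteratedDeriv_profile (n : ℕ) :
    iteratedDeriv n profile = fun r => (-1) ^ n * ((1 - n + r) * Real.exp (-r)) := by
  induction n with
  | zero => ext r; simp [profile]
  | succ n ih =>
    rw [iteratedDeriv_succ, ih]
    ext r
    have h1 : HasDerivAt (fun r : ℝ => Real.exp (-r)) (Real.exp (-r) * (-1)) r :=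
      (hasDerivAt_neg r).exp
    have h2 : HasDerivAt (fun r : ℝ => (1 - (n : ℝ) + r)) 1 r :=
      (hasDerivAt_id r).const_add _
    have h3 : HasDerivAt (fun r : ℝ => (-1 : ℝ) ^ n * ((1 - (n : ℝ) + r) * Real.exp (-r)))
        ((-1 : ℝ) ^ n * (1 * Real.exp (-r) + (1 - (n : ℝ) + r) * (Real.exp (-r) * (-1)))) r :=
      (h2.mul h1).const_mul _
    rw [h3.deriv]
    push_cast
    ring

lemma norm_iteratedFDeriv_profile_le {n i : ℕ} (hi : i ≤ n) {r : ℝ} (hr : 0 ≤ r) :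
    ‖iteratedFDeriv ℝ i profile r‖ ≤ 2 * (1 + n) * Real.exp (-(r / 2)) := by
  rw [norm_iteratedFDeriv_eq_norm_iteratedDeriv, iteratedDeriv_profile]
  have hi' : (i : ℝ) ≤ n := by exact_mod_cast hi
  have hi0 : (0 : ℝ) ≤ i := by positivity
  have h1 : |1 - (i : ℝ) + r| ≤ 1 + n + r := by
    rw [abs_le]; constructor <;> linarith
  have h2 : r / 2 + 1 ≤ Real.exp (r / 2) := Real.add_one_le_exp _
  have h3 : Real.exp (-r) = Real.exp (-(r / 2)) * Real.exp (-(r / 2)) := by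
    rw [← Real.exp_add]; congr 1; ring
  have h4 : Real.exp (r / 2) * Real.exp (-(r / 2)) = 1 := by
    rw [← Real.exp_add]; simp
  have he : 0 < Real.exp (-(r / 2)) := Real.exp_pos _
  simp only [norm_mul, norm_pow, norm_neg, norm_one, one_pow, one_mul, Real.norm_eq_abs,
    Real.abs_exp]
  calc |1 - (i : ℝ) + r| * Real.exp (-r)
      ≤ (2 * (1 + n) * Real.exp (r / 2)) * Real.exp (-r) := by
        gcongr
        nlinarith
    _ = _ := by rw [h3]; linear_combination 2 * (1 + n) * Real.exp (-(r / 2)) * h4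

lemma one_add_pow_mul_exp_le (n : ℕ) {s : ℝ} (hs : 0 ≤ s) :
    (1 + s) ^ n * Real.exp (-(s / 8)) ≤ (16 * (n + 1)) ^ n * Real.exp (-(s / 16)) := by
  have h1 : 1 + s ≤ 16 * (n + 1) * Real.exp (s / (16 * (n + 1))) := by
    have := Real.add_one_le_exp (s / (16 * ((n : ℝ) + 1)))
    have h2 : 16 * ((n : ℝ) + 1) * (s / (16 * (n + 1)) + 1) = s + 16 * (n + 1) := by
      field_simp
    have h3 : (0 : ℝ) ≤ n := by positivity
    nlinarith
  have h2 : (1 + s) ^ n ≤ (16 * (n + 1)) ^ n * Real.exp (s / 16) := by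
    calc (1 + s) ^ n ≤ (16 * (n + 1) * Real.exp (s / (16 * (n + 1)))) ^ n := by gcongr
      _ = (16 * (n + 1)) ^ n * Real.exp (n * (s / (16 * (n + 1)))) := by
        rw [mul_pow, ← Real.exp_nat_mul]
      _ ≤ _ := by
        gcongr
        rw [← mul_div_assoc, div_le_div_iff₀ (by positivity) (by positivity)]
        nlinarith
  calc _ ≤ ((16 * (n + 1)) ^ n * Real.exp (s / 16)) * Real.exp (-(s / 8)) := by gcongr
    _ = _ := by
      rw [mul_assoc, ← Real.exp_add]; congr 2; ring

section Symbol

variable {E : Type*} [NormedAddCommGroup E] [InnerProductSpace ℝ E]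

/-- `χ` localizes to a neighbourhood of the annulus `1/2 ≤ |ξ| ≤ 2`, and `ρ` is a globally smooth
substitute for `|ξ|` on the support of `χ`. -/
lemma exists_cutoffs [FiniteDimensional ℝ E] : ∃ χ ρ : E → ℝ, ContDiff ℝ (⊤ : ℕ∞) χ ∧ ContDiff ℝ (⊤ : ℕ∞) ρ ∧
    HasCompactSupport χ ∧ (∀ ξ, 1 / 2 ≤ ‖ξ‖ → ‖ξ‖ ≤ 2 → χ ξ = 1) ∧
    ∀ ξ ∈ tsupport χ, ρ ξ = ‖ξ‖ ∧ 1 / 4 ≤ ‖ξ‖ := by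
  let b₀ : ContDiffBump (0 : E) := ⟨1 / 8, 1 / 4, by norm_num, by norm_num⟩
  let b₁ : ContDiffBump (0 : E) := ⟨2, 3, by norm_num, by norm_num⟩
  let b₂ : ContDiffBump (0 : E) := ⟨3 / 8, 1 / 2, by norm_num, by norm_num⟩
  have hts : ∀ ξ ∈ tsupport (fun ξ => b₁ ξ * (1 - b₂ ξ)), 3 / 8 ≤ ‖ξ‖ := by
    have hc : IsClosed {ξ : E | 3 / 8 ≤ ‖ξ‖} := isClosed_le continuous_const continuous_norm
    refine fun ξ hξ => closure_minimal (fun η hη => ?_) hc hξ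
    by_contra hlt
    have h1 : b₂ η = 1 := b₂.one_of_mem_closedBall (by
      simp only [Set.mem_ofPred_eq, not_le] at hlt
      simpa [b₂] using hlt.le)
    simp [h1] at hη
  refine ⟨fun ξ => b₁ ξ * (1 - b₂ ξ), fun ξ => Real.sqrt (‖ξ‖ ^ 2 + b₀ ξ),
    b₁.contDiff.mul (contDiff_const.sub b₂.contDiff), ?_, b₁.hasCompactSupport.mul_right, ?_, ?_⟩
  · refine ContDiff.sqrt ((contDiff_norm_sq ℝ).add b₀.contDiff) fun ξ => ?_
    rcases eq_or_ne ξ 0 with rfl | h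
    · have : b₀ (0 : E) = 1 := b₀.one_of_mem_closedBall (by simp [b₀])
      simp [this]
    · have := b₀.nonneg (x := ξ)
      have := norm_pos_iff.2 h
      positivity
  · intro ξ h1 h2
    have e1 : b₁ ξ = 1 := b₁.one_of_mem_closedBall (by simpa [b₁] using h2)
    have e2 : b₂ ξ = 0 := b₂.zero_of_le_dist (by simpa [b₂] using h1)
    simp [e1, e2]
  · intro ξ hξ
    have h := hts ξ hξ
    have e : b₀ ξ = 0 := b₀.zero_of_le_dist (by simp [b₀]; linarith)
    refine ⟨by simp [e], by linarith⟩

/-- Each Schwartz seminorm of `χ · profile (s ρ)` decays exponentially in `s`: by Faà di Bruno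
the `n`-th derivative is at most a constant times `(1 + s)^n e^{-s/8}` on the support of `χ`. -/
lemma symbol_bound {χ ρ : E → ℝ} (hχ : ContDiff ℝ (⊤ : ℕ∞) χ) (hρ : ContDiff ℝ (⊤ : ℕ∞) ρ)
    (hc : HasCompactSupport χ) (hs : ∀ ξ ∈ tsupport χ, ρ ξ = ‖ξ‖ ∧ 1 / 4 ≤ ‖ξ‖) (k n : ℕ) :
    ∃ C : ℝ, 0 ≤ C ∧ ∀ s : ℝ, 0 < s → ∀ x : E,
      ‖x‖ ^ k * ‖iteratedFDeriv ℝ n (fun ξ => χ ξ * profile (s * ρ ξ)) x‖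
        ≤ C * Real.exp (-(s / 16)) := by
  have hbd : ∀ {f : E → ℝ}, ContDiff ℝ (⊤ : ℕ∞) f → ∀ i : ℕ, ∃ A : ℝ, ∀ x ∈ tsupport χ,
      ‖iteratedFDeriv ℝ i f x‖ ≤ A := fun hf i =>
    hc.exists_bound_of_continuousOn
      (hf.continuous_iteratedFDeriv (m := i) (by exact_mod_cast le_top)).continuousOn
  choose A hA using hbd hχ
  choose B hB using hbd hρ
  obtain ⟨R, hR⟩ := hc.exists_bound_of_continuousOn (f := fun x : E => x) continuousOn_id
  set M : ℝ := 1 + ∑ i ∈ Finset.range (n + 1), |B i| with hM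
  have hM1 : 1 ≤ M := by
    rw [hM]; linarith [Finset.sum_nonneg fun i (_ : i ∈ Finset.range (n + 1)) => abs_nonneg (B i)]
  have hBM : ∀ i ≤ n, ∀ x ∈ tsupport χ, ‖iteratedFDeriv ℝ i ρ x‖ ≤ M := by
    intro i hi x hx
    have := Finset.single_le_sum (f := fun i => |B i|) (fun i _ => abs_nonneg (B i))
      (Finset.mem_range.2 (Nat.lt_succ_of_le hi))
    linarith [hB i x hx, le_abs_self (B i)]
  -- Faà di Bruno with outer bound `e^{-s/8}` (as `s ρ ≥ s/4` here) and inner bounds `((1+s)M)^i`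
  have hcomp : ∀ m ≤ n, ∀ s : ℝ, 0 < s → ∀ x ∈ tsupport χ,
      ‖iteratedFDeriv ℝ m (profile ∘ fun ξ => s * ρ ξ) x‖
        ≤ m.factorial * (2 * (1 + n) * M ^ m * (16 * (m + 1)) ^ m) * Real.exp (-(s / 16)) := by
    intro m hm s hs0 x hx
    obtain ⟨h1, h2⟩ := hs x hx
    have hr : s / 4 ≤ s * ρ x := by rw [h1]; nlinarith
    have hsρ : ContDiff ℝ (⊤ : ℕ∞) fun ξ => s * ρ ξ := contDiff_const.mul hρ
    have := norm_iteratedFDeriv_comp_le (n := m) (x := x) contDiff_profile hsρ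
      (by exact_mod_cast le_top)
      (C := 2 * (1 + n) * Real.exp (-(s / 8))) (D := (1 + s) * M) (fun i hi => by
        refine (norm_iteratedFDeriv_profile_le (hi.trans hm) (by linarith)).trans ?_
        refine mul_le_mul_of_nonneg_left (Real.exp_le_exp.2 ?_) (by positivity)
        linarith) (fun i hi1 hi => by
        have e : iteratedFDeriv ℝ i (fun ξ => s * ρ ξ) x = s • iteratedFDeriv ℝ i ρ x := by
          have := iteratedFDeriv_const_smul_apply (𝕜 := ℝ) (i := i) (a := s) (f := ρ) (x := x)
            (hρ.of_le (by exact_mod_cast le_top)).contDiffAt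
          simpa [Pi.smul_def] using this
        rw [e, norm_smul, Real.norm_of_nonneg hs0.le]
        calc s * ‖iteratedFDeriv ℝ i ρ x‖ ≤ (1 + s) * M := by
              gcongr
              · linarith
              · exact hBM i (hi.trans hm) x hx
          _ ≤ ((1 + s) * M) ^ i := le_self_pow₀ (by nlinarith) (by omega))
    refine this.trans ?_
    have h3 := one_add_pow_mul_exp_le m hs0.le
    calc _ = m.factorial * (2 * (1 + n) * M ^ m) * ((1 + s) ^ m * Real.exp (-(s / 8))) := by
          rw [mul_pow]; ring
      _ ≤ m.factorial * (2 * (1 + n) * M ^ m) *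
          ((16 * (m + 1)) ^ m * Real.exp (-(s / 16))) := by gcongr
      _ = _ := by ring
  refine ⟨|R| ^ k * ∑ i ∈ Finset.range (n + 1), n.choose i * |A i| *
    ((n - i).factorial * (2 * (1 + n) * M ^ (n - i) * (16 * ((n - i : ℕ) + 1)) ^ (n - i))),
    by positivity, fun s hs0 x => ?_⟩
  by_cases hx : x ∈ tsupport χ
  · have hsρ : ContDiff ℝ (⊤ : ℕ∞) fun ξ => profile (s * ρ ξ) :=
      contDiff_profile.comp (contDiff_const.mul hρ)
    rw [mul_assoc]
    refine mul_le_mul (pow_le_pow_left₀ (norm_nonneg _) ((hR x hx).trans (le_abs_self R)) k) ?_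
      (norm_nonneg _) (by positivity)
    refine (norm_iteratedFDeriv_mul_le hχ hsρ x (by exact_mod_cast le_top)).trans ?_
    rw [Finset.sum_mul]
    refine Finset.sum_le_sum fun i _ => ?_
    rw [mul_assoc _ _ (Real.exp _)]
    gcongr
    · exact (hA i x hx).trans (le_abs_self _)
    · exact hcomp (n - i) (Nat.sub_le _ _) s hs0 x hx
  · have h0 : iteratedFDeriv ℝ n (fun ξ => χ ξ * profile (s * ρ ξ)) x = 0 := by
      by_contra hne
      exact hx (tsupport_mul_subset_left (support_iteratedFDeriv_subset (𝕜 := ℝ) n hne))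
    rw [h0]
    simp only [norm_zero, mul_zero]
    positivity

open FourierTransform in
/-- The rescaled, localized multiplier is the restriction to the annulus of a Schwartz function
whose inverse Fourier transform has exponentially small `L¹` norm. -/
lemma exists_symbol [FiniteDimensional ℝ E] [MeasurableSpace E] [BorelSpace E] :
    ∃ C > (0 : ℝ), ∀ s : ℝ, 0 < s → ∃ m : SchwartzMap E ℂ,
      (∀ ξ, 1 / 2 ≤ ‖ξ‖ → ‖ξ‖ ≤ 2 → m ξ = (profile (s * ‖ξ‖) : ℝ)) ∧
      ∫⁻ x, ‖𝓕⁻ (m : E → ℂ) x‖ₑ ≤ ENNReal.ofReal (C * Real.exp (-(s / 16))) := by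
  obtain ⟨χ, ρ, hχ, hρ, hc, h1, hs⟩ := exists_cutoffs (E := E)
  -- `‖𝓕⁻ m‖_{L¹}` is a continuous seminorm of `m`
  let T : SchwartzMap E ℂ →L[ℝ] Lp ℂ 1 (volume : Measure E) :=
    (SchwartzMap.toLpCLM ℝ ℂ 1 volume).comp (FourierTransform.fourierInvCLM ℝ (SchwartzMap E ℂ))
  let q : Seminorm ℝ (SchwartzMap E ℂ) :=
    (normSeminorm ℝ (Lp ℂ 1 (volume : Measure E))).comp T.toLinearMap
  obtain ⟨S, K, hK, hq⟩ := Seminorm.bound_of_continuous (schwartz_withSeminorms ℝ E ℂ) q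
    (continuous_norm.comp T.continuous)
  choose A hA0 hA using symbol_bound hχ hρ hc hs
  refine ⟨K * (1 + ∑ i ∈ S, A i.1 i.2), ?_, fun s hs0 => ?_⟩
  · have : 0 ≤ ∑ i ∈ S, A i.1 i.2 := Finset.sum_nonneg fun i _ => hA0 _ _
    have : 0 < K := pos_iff_ne_zero.2 hK
    positivity
  have hf : ContDiff ℝ (⊤ : ℕ∞) fun ξ => χ ξ * profile (s * ρ ξ) :=
    hχ.mul (contDiff_profile.comp (contDiff_const.mul hρ))
  have hfc : HasCompactSupport fun ξ => ((χ ξ * profile (s * ρ ξ) : ℝ) : ℂ) :=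
    (hc.mul_right (f' := fun ξ => profile (s * ρ ξ))).comp_left (g := Complex.ofReal) rfl
  let m : SchwartzMap E ℂ := hfc.toSchwartzMap (Complex.ofRealCLM.contDiff.comp hf)
  have hm : ∀ ξ, m ξ = ((χ ξ * profile (s * ρ ξ) : ℝ) : ℂ) := fun ξ => rfl
  refine ⟨m, fun ξ ha hb => ?_, ?_⟩
  · have hχ1 := h1 ξ ha hb
    have : ξ ∈ tsupport χ := subset_tsupport _ (by simp [hχ1])
    rw [hm, hχ1, (hs ξ this).1, one_mul]
  · have hsem : ∀ i ∈ S, schwartzSeminormFamily ℝ E ℂ i m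
        ≤ (∑ i ∈ S, A i.1 i.2) * Real.exp (-(s / 16)) := by
      intro i hi
      refine SchwartzMap.seminorm_le_bound ℝ i.1 i.2 m ?_ fun x => ?_
      · have : 0 ≤ ∑ i ∈ S, A i.1 i.2 := Finset.sum_nonneg fun i _ => hA0 _ _
        positivity
      have e : ‖iteratedFDeriv ℝ i.2 m x‖
          = ‖iteratedFDeriv ℝ i.2 (fun ξ => χ ξ * profile (s * ρ ξ)) x‖ :=
        Complex.ofRealLI.norm_iteratedFDeriv_comp_left
          (hf.of_le (by exact_mod_cast le_top)).contDiffAt (le_refl (i.2 : WithTop ℕ∞))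
      rw [e]
      refine (hA i.1 i.2 s hs0 x).trans ?_
      gcongr
      exact Finset.single_le_sum (f := fun i : ℕ × ℕ => A i.1 i.2) (fun i _ => hA0 _ _) hi
    have hb := hq m
    have hsup : S.sup (schwartzSeminormFamily ℝ E ℂ) m
        ≤ (1 + ∑ i ∈ S, A i.1 i.2) * Real.exp (-(s / 16)) := by
      have : 0 ≤ ∑ i ∈ S, A i.1 i.2 := Finset.sum_nonneg fun i _ => hA0 _ _
      refine Seminorm.finset_sup_apply_le (by positivity) fun i hi => (hsem i hi).trans ?_
      gcongr
      linarith
    have hqm : q m = ∫ x, ‖(𝓕⁻ m : SchwartzMap E ℂ) x‖ := SchwartzMap.norm_toLp_one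
    rw [← SchwartzMap.fourierInv_coe, ← ofReal_integral_norm_eq_lintegral_enorm
      (SchwartzMap.integrable _), ← hqm]
    refine ENNReal.ofReal_le_ofReal (hb.trans ?_)
    rw [mul_assoc]
    exact mul_le_mul_of_nonneg_left hsup K.2

end Symbol

/-! ### Littlewood–Paley blocks on the Fourier side -/

open FourierTransform

/-- `FT` has no `2π` in the exponent, unlike Mathlib's `𝓕`. -/
lemma FT_eq_fourier {d : ℕ} (f : Rd d → ℂ) (ξ : Rd d) :
    FT f ξ = 𝓕 f ((2 * Real.pi)⁻¹ • ξ) := by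
  rw [Real.fourier_eq', FT]
  refine integral_congr_ae (Eventually.of_forall fun x => ?_)
  simp only [smul_eq_mul, inner_smul_right]
  congr 2
  have : (Real.pi : ℂ) ≠ 0 := by exact_mod_cast Real.pi_ne_zero
  push_cast
  field_simp

/-- The dilated kernel `φ_j`. -/
def phiJ {d : ℕ} (P : LPData d) (j : ℤ) (y : Rd d) : ℂ :=
  (((2:ℝ) ^ ((d : ℤ) * j) : ℝ) : ℂ) * P.φ ((2:ℝ) ^ j • y)

lemma integrable_phiJ {d : ℕ} (P : LPData d) (j : ℤ) : Integrable (phiJ P j) := by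
  have h : (2:ℝ) ^ j ≠ 0 := by positivity
  exact ((integrable_comp_smul_iff volume (fun y => P.φ y) h).2 P.φ.integrable).const_mul _

lemma LP_eq_convolution {d : ℕ} (P : LPData d) (j : ℤ) (f : Rd d → ℂ) :
    LP P j f = convolution (phiJ P j) f (ContinuousLinearMap.mul ℂ ℂ) volume := rfl

lemma pow_mul_integral_comp_smul {d : ℕ} (F : Rd d → ℂ) {R : ℝ} (hR : 0 < R) :
    ((R ^ d : ℝ) : ℂ) * ∫ x, F (R • x) = ∫ x, F x := by
  rw [Measure.integral_comp_smul_of_nonneg volume F R (hR := hR.le), finrank_euclideanSpace_fin,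
    Complex.real_smul, ← mul_assoc, ← Complex.ofReal_mul, mul_inv_cancel₀ (by positivity)]
  simp

lemma FT_phiJ {d : ℕ} (P : LPData d) (j : ℤ) (ξ : Rd d) :
    FT (phiJ P j) ξ = FT P.φ ((2:ℝ) ^ (-j) • ξ) := by
  have h : (0:ℝ) < (2:ℝ) ^ j := by positivity
  rw [FT, FT, ← pow_mul_integral_comp_smul
    (fun x => Complex.exp (-Complex.I * (↑(⟪x, (2:ℝ) ^ (-j) • ξ⟫) : ℂ)) * P.φ x) h,
    ← integral_const_mul]
  congr 1
  ext x
  have e : ⟪(2:ℝ) ^ j • x, (2:ℝ) ^ (-j) • ξ⟫ = ⟪x, ξ⟫ := by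
    rw [inner_smul_left, inner_smul_right, zpow_neg, conj_trivial, mul_inv_cancel_left₀ h.ne']
  have e2 : (2:ℝ) ^ ((d : ℤ) * j) = ((2:ℝ) ^ j) ^ d := by
    rw [mul_comm, zpow_mul, zpow_natCast]
  rw [e, phiJ, e2]
  ring

lemma FT_LP {d : ℕ} (P : LPData d) (j : ℤ) (f : SchwartzMap (Rd d) ℂ) (ξ : Rd d) :
    FT (LP P j f) ξ = FT P.φ ((2:ℝ) ^ (-j) • ξ) * FT f ξ := by
  rw [← FT_phiJ, FT_eq_fourier, FT_eq_fourier, FT_eq_fourier, LP_eq_convolution]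
  exact Real.fourier_mul_convolution_eq (integrable_phiJ P j) f.integrable _

lemma integrable_LP {d : ℕ} (P : LPData d) (j : ℤ) (f : SchwartzMap (Rd d) ℂ) :
    Integrable (LP P j f) :=
  (integrable_phiJ P j).integrable_convolution (ContinuousLinearMap.mul ℂ ℂ) f.integrable

lemma continuous_LP {d : ℕ} (P : LPData d) (j : ℤ) (f : SchwartzMap (Rd d) ℂ) :
    Continuous (LP P j f) := by
  refine BddAbove.continuous_convolution_right_of_integrable (ContinuousLinearMap.mul ℂ ℂ)
    ?_ (integrable_phiJ P j) f.continuous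
  refine ⟨SchwartzMap.seminorm ℝ 0 0 f, ?_⟩
  rintro _ ⟨x, rfl⟩
  exact f.norm_le_seminorm ℝ x

/-! ### The convolution kernel of the multiplier -/

/-- The convolution kernel with Fourier multiplier `m(2^{-j}ξ)`. -/
def multKernel {d : ℕ} (m : SchwartzMap (Rd d) ℂ) (j : ℤ) (y : Rd d) : ℂ :=
  (((2 * Real.pi) ^ d : ℝ) : ℂ)⁻¹ *
    ∫ ξ : Rd d, Complex.exp (Complex.I * (↑(⟪y, ξ⟫) : ℂ)) * m ((2:ℝ) ^ (-j) • ξ)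

lemma multKernel_eq {d : ℕ} (m : SchwartzMap (Rd d) ℂ) (j : ℤ) (y : Rd d) :
    multKernel m j y = ((((2:ℝ) ^ j / (2 * Real.pi)) ^ d : ℝ) : ℂ) *
      (𝓕⁻ m : SchwartzMap (Rd d) ℂ) (((2:ℝ) ^ j / (2 * Real.pi)) • y) := by
  have h : (0:ℝ) < (2:ℝ) ^ j := by positivity
  rw [multKernel, ← pow_mul_integral_comp_smul _ h, SchwartzMap.fourierInv_coe,
    Real.fourierInv_eq', ← mul_assoc]
  congr 1
  · push_cast
    rw [div_pow]
    ring
  · congr 1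
    ext ξ
    rw [smul_smul, zpow_neg, inv_mul_cancel₀ h.ne', one_smul, smul_eq_mul, inner_smul_right,
      inner_smul_right, real_inner_comm]
    congr 2
    have : (Real.pi : ℂ) ≠ 0 := by exact_mod_cast Real.pi_ne_zero
    push_cast
    field_simp

lemma continuous_multKernel {d : ℕ} (m : SchwartzMap (Rd d) ℂ) (j : ℤ) :
    Continuous (multKernel m j) := by
  rw [funext (multKernel_eq m j)]
  exact continuous_const.mul ((SchwartzMap.continuous _).comp (continuous_const_smul _))

/-- The kernel is an `L¹`-normalized dilate of `𝓕⁻ m`, so its `L¹` norm does not depend on `j`. -/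
lemma lintegral_multKernel {d : ℕ} (m : SchwartzMap (Rd d) ℂ) (j : ℤ) :
    ∫⁻ y, ‖multKernel m j y‖ₑ = ∫⁻ x, ‖𝓕⁻ (m : Rd d → ℂ) x‖ₑ := by
  have h : (0:ℝ) < (2:ℝ) ^ j / (2 * Real.pi) := by positivity
  have hi := (𝓕⁻ m : SchwartzMap (Rd d) ℂ).integrable (μ := volume)
  have hk : Integrable (multKernel m j) := by
    rw [funext (multKernel_eq m j)]
    exact (hi.comp_smul h.ne').const_mul _
  rw [← SchwartzMap.fourierInv_coe, ← ofReal_integral_norm_eq_lintegral_enorm hk,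
    ← ofReal_integral_norm_eq_lintegral_enorm hi]
  congr 1
  simp only [multKernel_eq, norm_mul, integral_const_mul, Complex.norm_real]
  rw [Measure.integral_comp_smul_of_nonneg volume
    (fun x => ‖(𝓕⁻ m : SchwartzMap (Rd d) ℂ) x‖) _ (hR := h.le), finrank_euclideanSpace_fin,
    Real.norm_of_nonneg (by positivity), smul_eq_mul, mul_inv_cancel_left₀ (by positivity)]

/-- Convolution with the kernel acts as the Fourier multiplier, by Fubini's theorem; no Fourier
inversion is involved. -/
lemma conv_multKernel {d : ℕ} (m : SchwartzMap (Rd d) ℂ) (j : ℤ) {g : Rd d → ℂ}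
    (hg : Integrable g) (x : Rd d) :
    ∫ y, multKernel m j y * g (x - y) = (((2 * Real.pi) ^ d : ℝ) : ℂ)⁻¹ *
      ∫ ξ : Rd d, Complex.exp (Complex.I * (↑(⟪x, ξ⟫) : ℂ)) *
        m ((2:ℝ) ^ (-j) • ξ) * FT g ξ := by
  have h : (2:ℝ) ^ (-j) ≠ 0 := by positivity
  have hm : Integrable fun ξ : Rd d => m ((2:ℝ) ^ (-j) • ξ) :=
    (integrable_comp_smul_iff volume (fun y => m y) h).2 m.integrable
  have hgx : Integrable fun y => g (x - y) := hg.comp_sub_left x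
  have hF : Integrable (Function.uncurry fun (y ξ : Rd d) =>
      Complex.exp (Complex.I * (↑(⟪y, ξ⟫) : ℂ)) * (g (x - y) * m ((2:ℝ) ^ (-j) • ξ)))
      (volume.prod volume) := by
    refine (hgx.mul_prod hm).bdd_mul (c := 1)
      (Continuous.aestronglyMeasurable (by fun_prop)) (Eventually.of_forall fun z => ?_)
    simp [Complex.norm_exp]
  calc _ = (((2 * Real.pi) ^ d : ℝ) : ℂ)⁻¹ * ∫ y, ∫ ξ : Rd d,
        Complex.exp (Complex.I * (↑(⟪y, ξ⟫) : ℂ)) * (g (x - y) * m ((2:ℝ) ^ (-j) • ξ)) := by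
        rw [← integral_const_mul]
        congr 1
        ext y
        rw [multKernel, mul_assoc, ← integral_mul_const]
        congr 2
        ext ξ
        ring
    _ = _ := by
        rw [integral_integral_swap hF]
        congr 2
        ext ξ
        rw [FT, ← integral_const_mul, ← integral_sub_left_eq_self _ volume x]
        congr 1
        ext y
        have : Complex.exp (Complex.I * (↑(⟪x - y, ξ⟫) : ℂ)) =
            Complex.exp (Complex.I * (↑(⟪x, ξ⟫) : ℂ)) *
              Complex.exp (-Complex.I * (↑(⟪y, ξ⟫) : ℂ)) := by
          rw [← Complex.exp_add, inner_sub_left]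
          push_cast
          congr 1
          ring
        rw [this, sub_sub_cancel]
        ring

/-- Dissipative estimate on Littlewood–Paley blocks for the
multipliers `(1 + t|ξ|) e^{-t|ξ|}`. -/
theorem poisson_multiplier_dissipative_estimate (d : ℕ) (hd : 1 ≤ d) (P : LPData d) :
    ∃ C > (0:ℝ), ∃ c > (0:ℝ), ∀ p : ℝ≥0∞, 1 ≤ p → ∀ j : ℤ, ∀ t : ℝ, 0 < t →
      ∀ f : SchwartzMap (Rd d) ℂ,
      eLpNorm (fun x : Rd d =>
          (((2 * Real.pi) ^ d : ℝ) : ℂ)⁻¹ *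
            ∫ ξ : Rd d, Complex.exp (Complex.I * (↑(⟪x, ξ⟫) : ℂ)) *
              ((1 : ℂ) + (↑(t * ‖ξ‖) : ℂ)) * Complex.exp (-(↑(t * ‖ξ‖) : ℂ)) *
              FT (⇑P.φ) ((2:ℝ) ^ (-j) • ξ) * FT (⇑f) ξ) p volume
        ≤ ENNReal.ofReal (C * Real.exp (-c * (2:ℝ) ^ j * t)) *
            eLpNorm (LP P j (⇑f)) p volume := by
  obtain ⟨C, hC, H⟩ := exists_symbol (E := Rd d)
  refine ⟨C, hC, 1 / 16, by norm_num, fun p hp j t ht f => ?_⟩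
  have h2j : (0:ℝ) < (2:ℝ) ^ j := by positivity
  obtain ⟨m, hm, hL⟩ := H ((2:ℝ) ^ j * t) (by positivity)
  have hu : (fun x : Rd d => (((2 * Real.pi) ^ d : ℝ) : ℂ)⁻¹ *
            ∫ ξ : Rd d, Complex.exp (Complex.I * (↑(⟪x, ξ⟫) : ℂ)) *
              ((1 : ℂ) + (↑(t * ‖ξ‖) : ℂ)) * Complex.exp (-(↑(t * ‖ξ‖) : ℂ)) *
              FT (⇑P.φ) ((2:ℝ) ^ (-j) • ξ) * FT (⇑f) ξ)
      = fun x => ∫ y, multKernel m j y * LP P j f (x - y) := by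
    ext x
    rw [conv_multKernel m j (integrable_LP P j f)]
    congr 2
    ext ξ
    rw [FT_LP]
    -- off the support of the cutoff both integrands vanish; on it, `m` equals the multiplier
    by_cases h0 : FT P.φ ((2:ℝ) ^ (-j) • ξ) = 0
    · simp only [h0, mul_zero, zero_mul]
    · obtain ⟨ha, hb⟩ := P.hsupp _ h0
      rw [hm _ ha hb, norm_smul, Real.norm_of_nonneg (by positivity), profile]
      have e : (2:ℝ) ^ j * t * ((2:ℝ) ^ (-j) * ‖ξ‖) = t * ‖ξ‖ := by
        rw [zpow_neg]; field_simp
      rw [e]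
      push_cast
      ring
  rw [hu]
  refine (eLpNorm_conv_le volume (continuous_multKernel m j).measurable
    (continuous_LP P j f).measurable hp).trans ?_
  gcongr
  rw [lintegral_multKernel]
  refine hL.trans_eq ?_
  congr 3
  ring
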